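/- arXiv:0908.1976 — 2 statements merged into one kernel-verified Lean document; each statement's English description precedes it below -/
import Mathlib

section
/- Let λ ∈ ℝⁿ be regular and half-integral (⟪λ, α∨⟫ ∈ (1/2)ℤ for every α ∈ Δ), let θ ∈ W be an involution, and let ε be a grading of the imaginary roots Δ_i(θ) = {α : θα = α}. Call the triple (θ, ε, λ) supportable if: for every long imaginary root α, ⟪λ, α∨⟫ ∈ ℤ when ε(α) = 0 and ⟪λ, α∨⟫ ∈ ℤ + 1/2 when ε(α) = 1; and for every long complex root α (θα ≠ ±α), ⟪λ, α∨ + θ(α∨)⟫ ∈ ℤ when ⟪α, θ(α∨)⟫ = 0 and ⟪λ, α∨ + θ(α∨)⟫ ∈ ℤ + 1/2 when ⟪α, θ(α∨)⟫ ≠ 0. Let W(λ) = {w ∈ W : wλ − λ lies in the ℤ-span of Δ} be the integral Weyl group. Then for every w ∈ W(λ): if (θ, ε, λ) is supportable, so is (wθw⁻¹, w×ε, λ), where (w×ε)(α) = ε(w⁻¹α) for α imaginary for wθw⁻¹. -/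
open scoped RealInnerProductSpace

noncomputable section

/-- Euclidean space `ℝⁿ`. -/
abbrev EucB (n : ℕ) := EuclideanSpace ℝ (Fin n)

/-- The `i`-th standard basis vector of `ℝⁿ`. -/
def eB (n : ℕ) (i : Fin n) : EucB n := EuclideanSpace.single i (1 : ℝ)

/-- The root system `Δ` of type `Bₙ`:
`{±eᵢ ± eⱼ : i < j} ∪ {±eᵢ}`. -/
def DeltaB (n : ℕ) : Set (EucB n) :=
  {v | (∃ i j : Fin n, i < j ∧
          (v = eB n i + eB n j ∨ v = eB n i - eB n j ∨
           v = -eB n i + eB n j ∨ v = -eB n i - eB n j)) ∨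
        ∃ i : Fin n, v = eB n i ∨ v = -eB n i}

/-- The positive system `Δ⁺ = {eᵢ ± eⱼ : i < j} ∪ {eᵢ}`. -/
def DeltaBpos (n : ℕ) : Set (EucB n) :=
  {v | (∃ i j : Fin n, i < j ∧ (v = eB n i + eB n j ∨ v = eB n i - eB n j)) ∨
        ∃ i : Fin n, v = eB n i}

/-- The coroot `α∨ = 2α/⟪α,α⟫`. -/
def corootB (n : ℕ) (α : EucB n) : EucB n := (2 / ⟪α, α⟫) • α

/-- The linear functional `x ↦ ⟪x, α∨⟫`. -/
def corootForm (n : ℕ) (α : EucB n) : Module.Dual ℝ (EucB n) where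
  toFun x := ⟪x, corootB n α⟫
  map_add' x y := inner_add_left _ _ _
  map_smul' c x := by simpa using real_inner_smul_left x (corootB n α) c

/-- The reflection `s_α(x) = x − ⟪x, α∨⟫ α` as a linear automorphism of `ℝⁿ`
(for `α` a root, the branch condition `⟪α, α∨⟫ = 2` holds). -/
def sReflB (n : ℕ) (α : EucB n) : EucB n ≃ₗ[ℝ] EucB n :=
  if h : corootForm n α α = 2 then Module.reflection h else LinearEquiv.refl ℝ (EucB n)

/-- The Weyl group `W(Bₙ)`, the subgroup of linear automorphisms of `ℝⁿ` generated by the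
reflections in the roots of `Δ`. -/
def WeylB (n : ℕ) : Subgroup (EucB n ≃ₗ[ℝ] EucB n) :=
  Subgroup.closure {g | ∃ α ∈ DeltaB n, g = sReflB n α}


/-- A real number is an integer. -/
def IsIntR (x : ℝ) : Prop := ∃ m : ℤ, x = m

/-- A real number is a strict half-integer (an element of `ℤ + 1/2`). -/
def IsStrictHalfIntR (x : ℝ) : Prop := ∃ m : ℤ, x = m + 1 / 2

/-- The triple `(θ, ε, λ)` is supportable: for every long imaginary root `α`,
`⟪λ, α∨⟫ ∈ ℤ` when `ε α = 0` and `⟪λ, α∨⟫ ∈ ℤ + 1/2` when `ε α = 1`; and for every long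
complex root `α`, `⟪λ, α∨ + θ(α∨)⟫ ∈ ℤ` when `⟪α, θ(α∨)⟫ = 0` and
`⟪λ, α∨ + θ(α∨)⟫ ∈ ℤ + 1/2` when `⟪α, θ(α∨)⟫ ≠ 0`. -/
def SupportableB (n : ℕ) (θ : EucB n ≃ₗ[ℝ] EucB n) (ε : EucB n → ZMod 2)
    (lam : EucB n) : Prop :=
  (∀ α, α ∈ DeltaB n → ⟪α, α⟫ = (2 : ℝ) → θ α = α →
    ((ε α = 0 → IsIntR ⟪lam, corootB n α⟫) ∧
     (ε α = 1 → IsStrictHalfIntR ⟪lam, corootB n α⟫))) ∧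
  (∀ α, α ∈ DeltaB n → ⟪α, α⟫ = (2 : ℝ) → θ α ≠ α → θ α ≠ -α →
    ((⟪α, θ (corootB n α)⟫ = 0 → IsIntR ⟪lam, corootB n α + θ (corootB n α)⟫) ∧
     (⟪α, θ (corootB n α)⟫ ≠ 0 →
        IsStrictHalfIntR ⟪lam, corootB n α + θ (corootB n α)⟫)))

/-!
Supportability is transported by the Weyl group: if `(θ, ε, λ)` is supportable, then so is
`(wθw⁻¹, w×ε, wλ)`. The root lattice of `Bₙ` is `ℤⁿ`, on which the inner product is integral
and which contains the coroots, so when `θ` preserves this lattice the pairings in the definition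
of supportability change only by integers under a translation of `λ` by the root lattice. Hence
`wλ` may be replaced by `λ`. That `W` permutes `Δ` follows from the description of the
roots as the lattice vectors of squared length `1` or `2`.
-/

theorem isIntR_iff_of_sub {x y : ℝ} (h : IsIntR (x - y)) : IsIntR x ↔ IsIntR y := by
  obtain ⟨k, hk⟩ := h
  obtain rfl : x = y + k := by linarith
  refine ⟨fun ⟨m, hm⟩ => ⟨m - k, ?_⟩, fun ⟨m, hm⟩ => ⟨m + k, ?_⟩⟩ <;> push_cast <;> linarith

theorem isStrictHalfIntR_iff_of_sub {x y : ℝ} (h : IsIntR (x - y)) :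
    IsStrictHalfIntR x ↔ IsStrictHalfIntR y := by
  obtain ⟨k, hk⟩ := h
  obtain rfl : x = y + k := by linarith
  refine ⟨fun ⟨m, hm⟩ => ⟨m - k, ?_⟩, fun ⟨m, hm⟩ => ⟨m + k, ?_⟩⟩ <;> push_cast <;> linarith

/-- The root lattice of type `Bₙ`, the `ℤ`-span of `Δ`. -/
abbrev rootLatticeB (n : ℕ) : Submodule ℤ (EucB n) := Submodule.span ℤ (DeltaB n)

section

variable {n : ℕ}

theorem inner_eB_right (v : EucB n) (i : Fin n) : ⟪v, eB n i⟫ = v i := by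
  simp [eB, EuclideanSpace.inner_single_right]

theorem eB_mem_rootLatticeB (i : Fin n) : eB n i ∈ rootLatticeB n :=
  Submodule.subset_span (Or.inr ⟨i, Or.inl rfl⟩)

theorem rootLatticeB_eq_span_range_eB : rootLatticeB n = Submodule.span ℤ (Set.range (eB n)) := by
  refine le_antisymm (Submodule.span_le.2 fun v hv => ?_)
    (Submodule.span_le.2 (Set.range_subset_iff.2 eB_mem_rootLatticeB))
  have he (i : Fin n) : eB n i ∈ Submodule.span ℤ (Set.range (eB n)) :=
    Submodule.subset_span ⟨i, rfl⟩
  rcases hv with ⟨i, j, -, rfl | rfl | rfl | rfl⟩ | ⟨i, rfl | rfl⟩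
  · exact add_mem (he i) (he j)
  · exact sub_mem (he i) (he j)
  · exact add_mem (neg_mem (he i)) (he j)
  · exact sub_mem (neg_mem (he i)) (he j)
  · exact he i
  · exact neg_mem (he i)

theorem mem_rootLatticeB_iff {v : EucB n} : v ∈ rootLatticeB n ↔ ∀ i, IsIntR (v i) := by
  have hrange : eB n = (EuclideanSpace.basisFun (Fin n) ℝ).toBasis := by
    ext1 i
    simp [eB]
  rw [rootLatticeB_eq_span_range_eB, hrange, Module.Basis.mem_span_iff_repr_mem]
  simp [IsIntR, eq_comm]

theorem isIntR_inner {u v : EucB n} (hu : u ∈ rootLatticeB n) (hv : v ∈ rootLatticeB n) :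
    IsIntR ⟪u, v⟫ := by
  choose a ha using mem_rootLatticeB_iff.1 hu
  choose b hb using mem_rootLatticeB_iff.1 hv
  exact ⟨∑ i, b i * a i, by simp [PiLp.inner_apply, ha, hb]⟩

theorem smul_mem_rootLatticeB {c : ℝ} {v : EucB n} (hc : IsIntR c) (hv : v ∈ rootLatticeB n) :
    c • v ∈ rootLatticeB n := by
  obtain ⟨m, rfl⟩ := hc
  rw [Int.cast_smul_eq_zsmul]
  exact Submodule.smul_mem _ m hv

theorem isIntR_of_eq_one_or_neg_one {a : ℝ} (ha : a = 1 ∨ a = -1) : IsIntR a := by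
  rcases ha with rfl | rfl
  · exact ⟨1, by norm_num⟩
  · exact ⟨-1, by norm_num⟩

theorem inner_self_sub_smul_eB (v : EucB n) (i : Fin n) :
    ⟪v - v i • eB n i, v - v i • eB n i⟫ = ⟪v, v⟫ - v i ^ 2 := by
  have hunit : eB n i i = 1 := by simp [eB]
  simp only [inner_sub_left, inner_sub_right, real_inner_smul_left, real_inner_smul_right,
    real_inner_comm v (eB n i), inner_eB_right, hunit]
  ring

theorem exists_apply_eq_one_or_neg_one {v : EucB n} (hv : v ∈ rootLatticeB n) (hv0 : v ≠ 0)
    (hv4 : ⟪v, v⟫ < 4) : ∃ i, v i = 1 ∨ v i = -1 := by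
  obtain ⟨i, hi⟩ : ∃ i, v i ≠ 0 := by
    contrapose! hv0
    ext i
    exact hv0 i
  obtain ⟨m, hm⟩ := mem_rootLatticeB_iff.1 hv i
  have hlt : (m : ℝ) ^ 2 < 2 ^ 2 := by
    have hpos : 0 ≤ ⟪v, v⟫ - v i ^ 2 := inner_self_sub_smul_eB v i ▸ real_inner_self_nonneg
    rw [hm] at hpos
    linarith
  have hm2 : |m| < 2 := by
    rw [sq_lt_sq, abs_two] at hlt
    exact_mod_cast hlt
  have hm0 : m ≠ 0 := by
    rintro rfl
    simp [hm] at hi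
  obtain rfl | rfl : m = 1 ∨ m = -1 := by
    rw [abs_lt] at hm2
    omega
  · exact ⟨i, Or.inl (by simpa using hm)⟩
  · exact ⟨i, Or.inr (by simpa using hm)⟩

theorem exists_eq_smul_eB_add {v : EucB n} (hv : v ∈ rootLatticeB n) (hv0 : v ≠ 0)
    (hv4 : ⟪v, v⟫ < 4) :
    ∃ (i : Fin n) (a : ℝ) (u : EucB n), (a = 1 ∨ a = -1) ∧ u ∈ rootLatticeB n ∧ u i = 0 ∧
      ⟪u, u⟫ = ⟪v, v⟫ - 1 ∧ v = a • eB n i + u := by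
  obtain ⟨i, hi⟩ := exists_apply_eq_one_or_neg_one hv hv0 hv4
  refine ⟨i, v i, v - v i • eB n i, hi, ?_, by simp [eB], ?_, by abel⟩
  · exact sub_mem hv (smul_mem_rootLatticeB (isIntR_of_eq_one_or_neg_one hi)
      (eB_mem_rootLatticeB i))
  · rw [inner_self_sub_smul_eB, sq_eq_one_iff.2 hi]

theorem exists_eq_smul_eB_of_inner_self_eq_one {v : EucB n} (hv : v ∈ rootLatticeB n)
    (hv1 : ⟪v, v⟫ = 1) : ∃ (i : Fin n) (a : ℝ), (a = 1 ∨ a = -1) ∧ v = a • eB n i := by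
  obtain ⟨i, a, u, ha, -, -, huu, rfl⟩ := exists_eq_smul_eB_add hv
    (by rintro rfl; simp at hv1) (by linarith)
  have hu : u = 0 := inner_self_eq_zero (𝕜 := ℝ).1 (by rw [huu, hv1, sub_self])
  exact ⟨i, a, ha, by rw [hu, add_zero]⟩

theorem exists_eq_smul_eB_add_smul_eB_of_inner_self_eq_two {v : EucB n}
    (hv : v ∈ rootLatticeB n) (hv2 : ⟪v, v⟫ = 2) :
    ∃ (i j : Fin n) (a b : ℝ), i ≠ j ∧ (a = 1 ∨ a = -1) ∧ (b = 1 ∨ b = -1) ∧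
      v = a • eB n i + b • eB n j := by
  obtain ⟨i, a, u, ha, hu, hui, huu, rfl⟩ := exists_eq_smul_eB_add hv
    (by rintro rfl; simp at hv2) (by linarith)
  obtain ⟨j, b, hb, rfl⟩ := exists_eq_smul_eB_of_inner_self_eq_one hu (by rw [huu, hv2]; norm_num)
  refine ⟨i, j, a, b, ?_, ha, hb, rfl⟩
  rintro rfl
  rcases hb with rfl | rfl <;> simp [eB] at hui

theorem smul_eB_mem_deltaB {a : ℝ} (ha : a = 1 ∨ a = -1) (i : Fin n) :
    a • eB n i ∈ DeltaB n := by
  refine Or.inr ⟨i, ?_⟩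
  rcases ha with rfl | rfl <;> simp

theorem smul_eB_add_smul_eB_mem_deltaB {a b : ℝ} {i j : Fin n} (ha : a = 1 ∨ a = -1)
    (hb : b = 1 ∨ b = -1) (hij : i ≠ j) : a • eB n i + b • eB n j ∈ DeltaB n := by
  wlog hlt : i < j generalizing a b i j
  · rw [add_comm]
    exact this hb ha hij.symm (hij.lt_or_gt.resolve_left hlt)
  refine Or.inl ⟨i, j, hlt, ?_⟩
  rcases ha with rfl | rfl <;> rcases hb with rfl | rfl <;> simp [sub_eq_add_neg]

theorem inner_self_of_mem_deltaB {α : EucB n} (hα : α ∈ DeltaB n) :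
    ⟪α, α⟫ = (1 : ℝ) ∨ ⟪α, α⟫ = (2 : ℝ) := by
  rcases hα with ⟨i, j, hij, rfl | rfl | rfl | rfl⟩ | ⟨i, rfl | rfl⟩
  case inr.inl | inr.inr =>
    left
    simp [eB]
  all_goals
    right
    simp only [inner_add_right, inner_sub_right, inner_neg_right, inner_eB_right]
    norm_num [eB, hij.ne, hij.ne']

theorem mem_deltaB_iff {α : EucB n} :
    α ∈ DeltaB n ↔ α ∈ rootLatticeB n ∧ (⟪α, α⟫ = (1 : ℝ) ∨ ⟪α, α⟫ = (2 : ℝ)) := by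
  refine ⟨fun hα => ⟨Submodule.subset_span hα, inner_self_of_mem_deltaB hα⟩, ?_⟩
  rintro ⟨hα, hshort | hlong⟩
  · obtain ⟨i, a, ha, rfl⟩ := exists_eq_smul_eB_of_inner_self_eq_one hα hshort
    exact smul_eB_mem_deltaB ha i
  · obtain ⟨i, j, a, b, hij, ha, hb, rfl⟩ :=
      exists_eq_smul_eB_add_smul_eB_of_inner_self_eq_two hα hlong
    exact smul_eB_add_smul_eB_mem_deltaB ha hb hij

theorem corootB_mem_rootLatticeB {α : EucB n} (hα : α ∈ DeltaB n) :
    corootB n α ∈ rootLatticeB n := by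
  refine smul_mem_rootLatticeB ?_ (Submodule.subset_span hα)
  rcases inner_self_of_mem_deltaB hα with h | h <;> rw [h]
  · exact ⟨2, by norm_num⟩
  · exact ⟨1, by norm_num⟩

theorem inner_corootB_self {α : EucB n} (hα : α ≠ 0) : ⟪α, corootB n α⟫ = 2 := by
  rw [corootB, real_inner_smul_right, div_mul_cancel₀ _ (inner_self_ne_zero.2 hα)]

theorem sReflB_apply (α x : EucB n) : sReflB n α x = x - ⟪x, corootB n α⟫ • α := by
  rcases eq_or_ne α 0 with rfl | hα
  · simp [sReflB]
  · have h : corootForm n α α = 2 := inner_corootB_self hα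
    rw [sReflB, dif_pos h, Module.reflection_apply]
    rfl

theorem sReflB_involutive (α : EucB n) : Function.Involutive (sReflB n α) := by
  unfold sReflB
  split_ifs with h
  · exact Module.involutive_reflection h
  · exact fun _ => rfl

theorem inner_sReflB_sReflB (α x y : EucB n) : ⟪sReflB n α x, sReflB n α y⟫ = ⟪x, y⟫ := by
  rcases eq_or_ne α 0 with rfl | hα
  · simp [sReflB_apply]
  · have hαα : ⟪α, α⟫ ≠ 0 := inner_self_ne_zero.2 hα
    simp only [sReflB_apply, corootB, inner_sub_left, inner_sub_right, real_inner_smul_left,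
      real_inner_smul_right, real_inner_comm y α]
    field_simp
    ring

theorem sReflB_mem_rootLatticeB {α x : EucB n} (hα : α ∈ DeltaB n) (hx : x ∈ rootLatticeB n) :
    sReflB n α x ∈ rootLatticeB n := by
  rw [sReflB_apply]
  exact sub_mem hx (smul_mem_rootLatticeB (isIntR_inner hx (corootB_mem_rootLatticeB hα))
    (Submodule.subset_span hα))

theorem inner_map_map_of_mem_weylB {g : EucB n ≃ₗ[ℝ] EucB n} (hg : g ∈ WeylB n) (x y : EucB n) :
    ⟪g x, g y⟫ = ⟪x, y⟫ := by
  induction hg using Subgroup.closure_induction generalizing x y with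
  | mem _ hs =>
    obtain ⟨α, -, rfl⟩ := hs
    exact inner_sReflB_sReflB α x y
  | one => rfl
  | mul g h _ _ hg hh => rw [LinearEquiv.mul_apply, LinearEquiv.mul_apply, hg, hh]
  | inv g _ hg => simpa using (hg (g⁻¹ x) (g⁻¹ y)).symm

theorem map_mem_rootLatticeB_iff {g : EucB n ≃ₗ[ℝ] EucB n} (hg : g ∈ WeylB n) {x : EucB n} :
    g x ∈ rootLatticeB n ↔ x ∈ rootLatticeB n := by
  induction hg using Subgroup.closure_induction generalizing x with
  | mem _ hs =>
    obtain ⟨α, hα, rfl⟩ := hs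
    refine ⟨fun hx => ?_, sReflB_mem_rootLatticeB hα⟩
    rw [← sReflB_involutive α x]
    exact sReflB_mem_rootLatticeB hα hx
  | one => rfl
  | mul g h _ _ hg hh => rw [LinearEquiv.mul_apply, hg, hh]
  | inv g _ hg => simpa using (hg (x := g⁻¹ x)).symm

theorem map_mem_deltaB_iff {g : EucB n ≃ₗ[ℝ] EucB n} (hg : g ∈ WeylB n) {α : EucB n} :
    g α ∈ DeltaB n ↔ α ∈ DeltaB n := by
  rw [mem_deltaB_iff, mem_deltaB_iff, map_mem_rootLatticeB_iff hg, inner_map_map_of_mem_weylB hg]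

theorem corootB_map {g : EucB n ≃ₗ[ℝ] EucB n} (hg : g ∈ WeylB n) (α : EucB n) :
    corootB n (g α) = g (corootB n α) := by
  rw [corootB, corootB, inner_map_map_of_mem_weylB hg, map_smul]

theorem SupportableB.conj {θ w : EucB n ≃ₗ[ℝ] EucB n} {ε : EucB n → ZMod 2} {lam : EucB n}
    (hsupp : SupportableB n θ ε lam) (hw : w ∈ WeylB n) :
    SupportableB n (w * θ * w⁻¹) (fun α => ε (w⁻¹ α)) (w lam) := by
  have hconj (x : EucB n) : (w * θ * w⁻¹) (w x) = w (θ x) := by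
    simp only [LinearEquiv.mul_apply, LinearEquiv.coe_inv, LinearEquiv.symm_apply_apply]
  constructor
  all_goals
    intro α hα hlong
    obtain ⟨β, rfl⟩ := w.surjective α
    rw [map_mem_deltaB_iff hw] at hα
    rw [inner_map_map_of_mem_weylB hw] at hlong
  · intro him
    rw [hconj, w.injective.eq_iff] at him
    simpa only [corootB_map hw, inner_map_map_of_mem_weylB hw, LinearEquiv.coe_inv,
      LinearEquiv.symm_apply_apply]
      using hsupp.1 β hα hlong him
  · intro hni hnr
    rw [hconj, ← map_neg, w.injective.ne_iff] at hnr
    rw [hconj, w.injective.ne_iff] at hni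
    simpa only [corootB_map hw, hconj, ← map_add, inner_map_map_of_mem_weylB hw]
      using hsupp.2 β hα hlong hni hnr

theorem SupportableB.of_sub_mem_rootLatticeB {θ : EucB n ≃ₗ[ℝ] EucB n} {ε : EucB n → ZMod 2}
    {lam mu : EucB n} (hsupp : SupportableB n θ ε lam)
    (hθ : ∀ v ∈ rootLatticeB n, θ v ∈ rootLatticeB n) (hsub : mu - lam ∈ rootLatticeB n) :
    SupportableB n θ ε mu := by
  have hcongr {v : EucB n} (hv : v ∈ rootLatticeB n) : IsIntR (⟪mu, v⟫ - ⟪lam, v⟫) := by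
    rw [← inner_sub_left]
    exact isIntR_inner hsub hv
  refine ⟨fun α hα hlong him => ?_, fun α hα hlong hni hnr => ?_⟩
  · have hcoroot := corootB_mem_rootLatticeB hα
    rw [isIntR_iff_of_sub (hcongr hcoroot), isStrictHalfIntR_iff_of_sub (hcongr hcoroot)]
    exact hsupp.1 α hα hlong him
  · have hcoroot := corootB_mem_rootLatticeB hα
    have hsum := hcongr (add_mem hcoroot (hθ _ hcoroot))
    rw [isIntR_iff_of_sub hsum, isStrictHalfIntR_iff_of_sub hsum]
    exact hsupp.2 α hα hlong hni hnr

theorem supportable_cross_action_general {θ w : EucB n ≃ₗ[ℝ] EucB n} {ε : EucB n → ZMod 2}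
    {lam : EucB n} (hθ : ∀ v ∈ rootLatticeB n, θ v ∈ rootLatticeB n) (hw : w ∈ WeylB n)
    (hwint : w lam - lam ∈ rootLatticeB n) (hsupp : SupportableB n θ ε lam) :
    SupportableB n (w * θ * w⁻¹) (fun α => ε (w⁻¹ α)) lam := by
  refine (hsupp.conj hw).of_sub_mem_rootLatticeB (fun v hv => ?_) ?_
  · have hinv := (map_mem_rootLatticeB_iff (inv_mem hw)).2 hv
    exact (map_mem_rootLatticeB_iff hw).2 (hθ _ hinv)
  · rw [← neg_sub]
    exact neg_mem hwint

end

/-- Let `λ` be regular and half-integral, `θ ∈ W(Bₙ)` an involution, and `ε` a grading of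
the imaginary roots of `θ`.  For every element `w` of the integral Weyl group `W(λ)`
(elements of `W` with `wλ − λ` in the `ℤ`-span of `Δ`): if `(θ, ε, λ)` is supportable,
then so is the cross-acted triple `(wθw⁻¹, w×ε, λ)`, where `(w×ε)(α) = ε(w⁻¹α)`. -/
theorem supportable_cross_action (n : ℕ) (hn : 0 < n)
    (lam : EucB n)
    (hreg : ∀ α ∈ DeltaB n, ⟪lam, α⟫ ≠ 0)
    (hhalf : ∀ α ∈ DeltaB n, ∃ m : ℤ, ⟪lam, corootB n α⟫ = m / 2)
    (θ : EucB n ≃ₗ[ℝ] EucB n) (hθW : θ ∈ WeylB n) (hθ2 : θ * θ = 1)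
    (ε : EucB n → ZMod 2)
    (hε1 : ∀ α, α ∈ DeltaB n → θ α = α → ε (-α) = ε α)
    (hε2 : ∀ α β : EucB n, α ∈ DeltaB n → θ α = α → β ∈ DeltaB n → θ β = β →
      α + β ∈ DeltaB n → ε (α + β) = ε α + ε β)
    (w : EucB n ≃ₗ[ℝ] EucB n) (hwW : w ∈ WeylB n)
    (hwint : w lam - lam ∈ Submodule.span ℤ (DeltaB n))
    (hsupp : SupportableB n θ ε lam) :
    SupportableB n (w * θ * w⁻¹) (fun α => ε (w⁻¹ α)) lam := by
  exact supportable_cross_action_general (fun _ => (map_mem_rootLatticeB_iff hθW).2) hwW hwint hsupp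
end
end

section
/- In the notation of the context, let γ ∈ Δ_i be any imaginary root for θ (not necessarily simple). Then m_ε(s_γ) = ε(γ) · m_γ in M_θ, where m_ε(s_γ) is computed from any reduced expression of the reflection s_γ as a product of reflections in elements of Π_i, and m_γ is the image of π(γ∨) in M_θ. -/
open scoped RealInnerProductSpace

set_option synthInstance.maxHeartbeats 1000000

noncomputable section

/-- The coroot lattice `Q∨`, the `ℤ`-span of the coroots. -/
def QvB (n : ℕ) : Submodule ℤ (EucB n) :=
  Submodule.span ℤ {v | ∃ α ∈ DeltaB n, v = corootB n α}

/-- The submodule `2Q∨` of `Q∨`. -/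
def twoQB (n : ℕ) : Submodule ℤ ↥(QvB n) :=
  LinearMap.range ((2 : ℤ) • (LinearMap.id : ↥(QvB n) →ₗ[ℤ] ↥(QvB n)))

/-- The quotient `Q∨/2Q∨`. -/
abbrev QModB (n : ℕ) := ↥(QvB n) ⧸ twoQB n

/-- The quotient map `π : Q∨ → Q∨/2Q∨`. -/
def piQ (n : ℕ) : ↥(QvB n) →ₗ[ℤ] QModB n := (twoQB n).mkQ

/-- The `θ`-fixed vectors of `Q∨`. -/
def fixedQ (n : ℕ) (θ : EucB n ≃ₗ[ℝ] EucB n) : Submodule ℤ ↥(QvB n) where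
  carrier := {v | θ (v : EucB n) = (v : EucB n)}
  add_mem' := by
    intro a b ha hb
    simp only [Set.mem_setOf_eq, Submodule.coe_add, map_add] at *
    rw [ha, hb]
  zero_mem' := by simp
  smul_mem' := by
    intro c a ha
    simp only [Set.mem_setOf_eq, Submodule.coe_smul, map_zsmul] at *
    rw [ha]

/-- The `θ`-antifixed vectors of `Q∨` (those with `θv = −v`). -/
def negQ (n : ℕ) (θ : EucB n ≃ₗ[ℝ] EucB n) : Submodule ℤ ↥(QvB n) where
  carrier := {v | θ (v : EucB n) = -(v : EucB n)}
  add_mem' := by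
    intro a b ha hb
    simp only [Set.mem_setOf_eq, Submodule.coe_add, map_add] at *
    rw [ha, hb]; abel
  zero_mem' := by simp
  smul_mem' := by
    intro c a ha
    simp only [Set.mem_setOf_eq, Submodule.coe_smul, map_zsmul] at *
    rw [ha, smul_neg]

/-- `A₋ = π({v ∈ Q∨ : θv = v})`. -/
def AmB (n : ℕ) (θ : EucB n ≃ₗ[ℝ] EucB n) : Submodule ℤ (QModB n) :=
  (fixedQ n θ).map (piQ n)

/-- `A₊ = π({v ∈ Q∨ : θv = −v})`. -/
def ApB (n : ℕ) (θ : EucB n ≃ₗ[ℝ] EucB n) : Submodule ℤ (QModB n) :=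
  (negQ n θ).map (piQ n)

/-- `M_θ = A₋/(A₋ ∩ A₊)`. -/
abbrev MthB (n : ℕ) (θ : EucB n ≃ₗ[ℝ] EucB n) :=
  ↥(AmB n θ) ⧸ (ApB n θ).comap (AmB n θ).subtype

open Classical in
/-- `m_β ∈ M_θ`, the class of `π(β∨)` (defined when `β∨ ∈ Q∨` is fixed by `θ`,
e.g. for `β` an imaginary root). -/
def mB (n : ℕ) (θ : EucB n ≃ₗ[ℝ] EucB n) (β : EucB n) : MthB n θ :=
  if h : corootB n β ∈ QvB n ∧ θ (corootB n β) = corootB n β then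
    Submodule.Quotient.mk
      ⟨piQ n ⟨corootB n β, h.1⟩,
        Submodule.mem_map_of_mem (p := fixedQ n θ) (by exact h.2)⟩
  else 0

/-- The imaginary roots of `θ` that are positive. -/
def ImPosB (n : ℕ) (θ : EucB n ≃ₗ[ℝ] EucB n) : Set (EucB n) :=
  {α | α ∈ DeltaBpos n ∧ θ α = α}

/-- The simple roots `Π_i` of the positive imaginary system: positive imaginary roots
that are not sums of two positive imaginary roots. -/
def SimpleImB (n : ℕ) (θ : EucB n ≃ₗ[ℝ] EucB n) : Set (EucB n) :=
  {β | β ∈ ImPosB n θ ∧ ¬∃ γ δ : EucB n, γ ∈ ImPosB n θ ∧ δ ∈ ImPosB n θ ∧ β = γ + δ}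

/-- The product `s_{β_N}⋯s_{β₁}` of the reflections of a word `(β₁, …, β_N)`. -/
def wordProdB (n : ℕ) (L : List (EucB n)) : EucB n ≃ₗ[ℝ] EucB n :=
  ((L.map (sReflB n)).reverse).prod

/-- `S(β₁,…,β_N) = ∑_j ε(s_{β₁}⋯s_{β_{j−1}}(β_j)) · m_{β_j}`, computed with an
accumulator recording the prefix product `s_{β₁}⋯s_{β_{j−1}}`. -/
def SwordB (n : ℕ) (θ : EucB n ≃ₗ[ℝ] EucB n) (ε : EucB n → ZMod 2) :
    (EucB n ≃ₗ[ℝ] EucB n) → List (EucB n) → MthB n θ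
  | _, [] => 0
  | acc, β :: rest =>
      (ε (acc β)).val • mB n θ β + SwordB n θ ε (acc * sReflB n β) rest

/-!
Suppose `ε` is the reduction modulo `2` of `⟪·, x⟫` on the imaginary roots. Then each summand of
`S(β₁, …, β_N)` is the class of `y - s_β y` for a successive reflection `y` of `x`, so the sum
telescopes to the class of `x - w x`, where `w` is the product of the reflections. For `w = s_γ`
this is `⟪γ, x⟫ γ∨`, whose class is `ε(γ) m_γ`.

Such an `x` exists because `Δ ∩ V`, for any subspace `V`, admits a linear retraction `ρ` fixing
`Δ ∩ V` and sending each `eᵢ` to `0` or into `Δ ∩ V`: the `i`-th coordinate of `x` is `ε (ρ eᵢ)`.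
To build `ρ`, subtract from each `eᵢ ∉ V` the representative, chosen up to sign, of its class
modulo `V`.
-/

lemma intCast_val_nsmul {M : Type*} [AddCommGroup M] {N : ℕ} [NeZero N] {m : M}
    (hm : (N : ℤ) • m = 0) (k : ℤ) : (k : ZMod N).val • m = k • m := by
  rw [← natCast_zsmul, ZMod.val_intCast, Int.emod_def, sub_smul, mul_comm, mul_smul, hm, smul_zero,
    sub_zero]

lemma units_eq_of_smul_sub_smul_mem {K M : Type*} [DivisionRing K] [NeZero (2 : K)]
    [AddCommGroup M] [Module K M] {V : Submodule K M} {v : M} (hv : v ∉ V) {s t : ℤˣ}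
    (h : s • v - t • v ∈ V) : s = t := by
  have hv2 : v + v ∉ V := fun h2 => hv <| by
    rw [← two_smul K v] at h2
    exact (V.smul_mem_iff two_ne_zero).1 h2
  rcases Int.units_eq_one_or s with rfl | rfl <;> rcases Int.units_eq_one_or t with rfl | rfl
  · rfl
  · exact absurd (by simpa using h) hv2
  · exact absurd (by simpa [neg_add] using neg_mem h) hv2
  · rfl

section TypeB

variable {n : ℕ}

lemma inner_eB_left (i : Fin n) (x : EucB n) : ⟪eB n i, x⟫ = x i := by
  simp [eB, EuclideanSpace.inner_single_left]

lemma inner_eB_eB (i j : Fin n) : ⟪eB n i, eB n j⟫ = if i = j then (1 : ℝ) else 0 := by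
  rw [inner_eB_left, eB, PiLp.single_apply]

lemma corootForm_self {α : EucB n} (hα : α ≠ 0) : corootForm n α α = 2 := by
  change ⟪α, (2 / ⟪α, α⟫) • α⟫ = (2 : ℝ)
  rw [real_inner_smul_right, div_mul_cancel₀ _ (inner_self_ne_zero.2 hα)]

lemma sub_sReflB_apply (α x : EucB n) : x - sReflB n α x = ⟪α, x⟫ • corootB n α := by
  rcases eq_or_ne α 0 with rfl | hα
  · simp [sReflB]
  · rw [sReflB, dif_pos (corootForm_self hα), Module.reflection_apply, sub_sub_cancel]
    change ⟪x, (2 / ⟪α, α⟫) • α⟫ • α = ⟪α, x⟫ • (2 / ⟪α, α⟫) • α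
    rw [real_inner_smul_right, real_inner_comm α x, smul_smul, mul_comm]

lemma sReflB_apply_eq_reflection (α x : EucB n) :
    sReflB n α x = (ℝ ∙ α)ᗮ.reflection x := by
  rw [← sub_sub_cancel x (sReflB n α x), sub_sReflB_apply, Submodule.reflection_orthogonal_apply,
    Submodule.reflection_singleton_apply, corootB, real_inner_self_eq_norm_sq]
  simp only [RCLike.ofReal_real_eq_id, id_eq]
  module

lemma inner_sReflB_right (α x y : EucB n) : ⟪x, sReflB n α y⟫ = ⟪sReflB n α x, y⟫ := by
  simp only [sReflB_apply_eq_reflection]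
  rw [← LinearIsometryEquiv.inner_map_map (ℝ ∙ α)ᗮ.reflection x, Submodule.reflection_reflection]

lemma norm_sReflB (α x : EucB n) : ‖sReflB n α x‖ = ‖x‖ := by
  rw [sReflB_apply_eq_reflection, LinearIsometryEquiv.norm_map]

lemma mem_DeltaB_iff_signed {α : EucB n} : α ∈ DeltaB n ↔
    (∃ (s : ℤˣ) (i : Fin n), α = s • eB n i) ∨
      ∃ (s t : ℤˣ) (i j : Fin n), i ≠ j ∧ α = s • eB n i + t • eB n j := by
  constructor
  · rintro (⟨i, j, hij, rfl | rfl | rfl | rfl⟩ | ⟨i, rfl | rfl⟩)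
    · exact .inr ⟨1, 1, i, j, hij.ne, by simp⟩
    · exact .inr ⟨1, -1, i, j, hij.ne, by simp [sub_eq_add_neg]⟩
    · exact .inr ⟨-1, 1, i, j, hij.ne, by simp⟩
    · exact .inr ⟨-1, -1, i, j, hij.ne, by simp [sub_eq_add_neg]⟩
    · exact .inl ⟨1, i, by simp⟩
    · exact .inl ⟨-1, i, by simp⟩
  · rintro (⟨s, i, rfl⟩ | ⟨s, t, i, j, hij, rfl⟩)
    · rcases Int.units_eq_one_or s with rfl | rfl <;> exact .inr ⟨i, by simp⟩
    · rcases hij.lt_or_gt with hij | hji <;> rcases Int.units_eq_one_or s with rfl | rfl <;>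
        rcases Int.units_eq_one_or t with rfl | rfl
      all_goals first
        | exact .inl ⟨i, j, hij, by simp [sub_eq_add_neg]⟩
        | exact .inl ⟨j, i, hji, by simp [sub_eq_add_neg, add_comm]⟩

/-- The lattice `ℤⁿ ⊆ ℝⁿ`. -/
def integerLattice (n : ℕ) : Submodule ℤ (EucB n) := Submodule.span ℤ (Set.range (eB n))

lemma units_smul_eB_mem_integerLattice (s : ℤˣ) (i : Fin n) :
    s • eB n i ∈ integerLattice n :=
  Submodule.smul_mem _ (s : ℤ) (Submodule.subset_span ⟨i, rfl⟩)

lemma exists_int_inner_eq {x y : EucB n} (hx : x ∈ integerLattice n)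
    (hy : y ∈ integerLattice n) : ∃ k : ℤ, ⟪x, y⟫ = (k : ℝ) := by
  induction hx, hy using Submodule.span_induction₂ with
  | mem_mem x y hx hy =>
    obtain ⟨i, rfl⟩ := hx
    obtain ⟨j, rfl⟩ := hy
    exact ⟨if i = j then 1 else 0, by simp [inner_eB_eB]⟩
  | zero_left y _ => exact ⟨0, by simp⟩
  | zero_right x _ => exact ⟨0, by simp⟩
  | add_left x y z _ _ _ hx hy =>
    obtain ⟨k, hk⟩ := hx
    obtain ⟨l, hl⟩ := hy
    exact ⟨k + l, by rw [inner_add_left, hk, hl, Int.cast_add]⟩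
  | add_right x y z _ _ _ hx hy =>
    obtain ⟨k, hk⟩ := hx
    obtain ⟨l, hl⟩ := hy
    exact ⟨k + l, by rw [inner_add_right, hk, hl, Int.cast_add]⟩
  | smul_left r x y _ _ h =>
    obtain ⟨k, hk⟩ := h
    exact ⟨r * k, by rw [← Int.cast_smul_eq_zsmul ℝ, real_inner_smul_left, hk, Int.cast_mul]⟩
  | smul_right r x y _ _ h =>
    obtain ⟨k, hk⟩ := h
    exact ⟨r * k, by rw [← Int.cast_smul_eq_zsmul ℝ, real_inner_smul_right, hk, Int.cast_mul]⟩

lemma norm_units_smul_eB (s : ℤˣ) (i : Fin n) : ‖s • eB n i‖ = 1 := by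
  rcases Int.units_eq_one_or s with rfl | rfl <;> simp [eB]

lemma inner_units_smul_eB_of_ne (s t : ℤˣ) {i j : Fin n} (hij : i ≠ j) :
    ⟪s • eB n i, t • eB n j⟫ = (0 : ℝ) := by
  rcases Int.units_eq_one_or s with rfl | rfl <;> rcases Int.units_eq_one_or t with rfl | rfl <;>
    simp [inner_eB_eB, hij]

lemma norm_sub_units_smul_eB_sq {v : EucB n} {i : Fin n} {s : ℤˣ} (hs : v i = (s : ℤ)) :
    ‖v - s • eB n i‖ ^ 2 = ‖v‖ ^ 2 - 1 := by
  have hss : ((s : ℤ) : ℝ) * (s : ℤ) = 1 := by exact_mod_cast Int.units_coe_mul_self s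
  have hinner : ⟪v, s • eB n i⟫ = (1 : ℝ) := by
    rw [Units.smul_def, ← Int.cast_smul_eq_zsmul ℝ, real_inner_smul_right, real_inner_comm,
      inner_eB_left, hs, hss]
  rw [norm_sub_sq_real, hinner, norm_units_smul_eB]
  ring

lemma exists_apply_eq_units_of_mem_integerLattice {v : EucB n} (hv : v ∈ integerLattice n)
    (hv0 : v ≠ 0) (hv4 : ‖v‖ ^ 2 < 4) : ∃ (s : ℤˣ) (i : Fin n), v i = (s : ℤ) := by
  obtain ⟨i, hi⟩ : ∃ i, v i ≠ 0 := by
    by_contra! h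
    exact hv0 (PiLp.ext h)
  obtain ⟨k, hk⟩ := exists_int_inner_eq (Submodule.subset_span ⟨i, rfl⟩) hv
  rw [inner_eB_left] at hk
  have hk0 : k ≠ 0 := by
    rintro rfl
    exact hi (by simpa using hk)
  have hk2 : |k| < 2 := by
    have hle : |v i| ≤ ‖v‖ := PiLp.norm_apply_le v i
    have hlt : |(k : ℝ)| < 2 := by
      rw [← hk]
      exact hle.trans_lt (lt_of_pow_lt_pow_left₀ 2 zero_le_two (by linarith))
    exact_mod_cast hlt
  obtain ⟨s, rfl⟩ : IsUnit k := Int.isUnit_iff.2 (by grind)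
  exact ⟨s, i, hk⟩

lemma exists_eq_units_smul_eB_of_norm_sq_eq_one {v : EucB n} (hv : v ∈ integerLattice n)
    (h : ‖v‖ ^ 2 = 1) : ∃ (s : ℤˣ) (i : Fin n), v = s • eB n i := by
  have hv0 : v ≠ 0 := by
    rintro rfl
    simp at h
  obtain ⟨s, i, hs⟩ := exists_apply_eq_units_of_mem_integerLattice hv hv0 (by linarith)
  have hrest : ‖v - s • eB n i‖ ^ 2 = 0 := by
    rw [norm_sub_units_smul_eB_sq hs, h, sub_self]
  exact ⟨s, i, sub_eq_zero.1 (norm_eq_zero.1 (pow_eq_zero_iff two_ne_zero |>.1 hrest))⟩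

lemma exists_eq_add_units_smul_eB_of_norm_sq_eq_two {v : EucB n} (hv : v ∈ integerLattice n)
    (h : ‖v‖ ^ 2 = 2) :
    ∃ (s t : ℤˣ) (i j : Fin n), i ≠ j ∧ v = s • eB n i + t • eB n j := by
  have hv0 : v ≠ 0 := by
    rintro rfl
    simp at h
  obtain ⟨s, i, hs⟩ := exists_apply_eq_units_of_mem_integerLattice hv hv0 (by linarith)
  have hrest : ‖v - s • eB n i‖ ^ 2 = 1 := by
    rw [norm_sub_units_smul_eB_sq hs, h]
    norm_num
  obtain ⟨t, j, ht⟩ := exists_eq_units_smul_eB_of_norm_sq_eq_one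
    (sub_mem hv (units_smul_eB_mem_integerLattice s i)) hrest
  refine ⟨s, t, i, j, ?_, by rw [← ht, add_sub_cancel]⟩
  rintro rfl
  have hcoord := congrArg (fun w : EucB n => w i) ht
  rcases Int.units_eq_one_or s with rfl | rfl <;>
    rcases Int.units_eq_one_or t with rfl | rfl <;>
    simp [hs, eB] at hcoord

theorem mem_DeltaB_iff {α : EucB n} :
    α ∈ DeltaB n ↔ α ∈ integerLattice n ∧ (‖α‖ ^ 2 = 1 ∨ ‖α‖ ^ 2 = 2) := by
  rw [mem_DeltaB_iff_signed]
  constructor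
  · rintro (⟨s, i, rfl⟩ | ⟨s, t, i, j, hij, rfl⟩)
    · exact ⟨units_smul_eB_mem_integerLattice s i, .inl (by rw [norm_units_smul_eB, one_pow])⟩
    · refine ⟨add_mem (units_smul_eB_mem_integerLattice s i)
        (units_smul_eB_mem_integerLattice t j), .inr ?_⟩
      rw [norm_add_sq_real, norm_units_smul_eB, norm_units_smul_eB,
        inner_units_smul_eB_of_ne s t hij]
      norm_num
  · rintro ⟨hα, h | h⟩
    · exact .inl (exists_eq_units_smul_eB_of_norm_sq_eq_one hα h)
    · exact .inr (exists_eq_add_units_smul_eB_of_norm_sq_eq_two hα h)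

lemma ne_zero_of_mem_DeltaB {α : EucB n} (hα : α ∈ DeltaB n) : α ≠ 0 := by
  rintro rfl
  simpa using (mem_DeltaB_iff.1 hα).2

lemma units_smul_mem_DeltaB {α : EucB n} (hα : α ∈ DeltaB n) (s : ℤˣ) : s • α ∈ DeltaB n := by
  obtain ⟨hα, hnorm⟩ := mem_DeltaB_iff.1 hα
  refine mem_DeltaB_iff.2 ⟨Submodule.smul_mem _ (s : ℤ) hα, ?_⟩
  rcases Int.units_eq_one_or s with rfl | rfl <;> simpa using hnorm

lemma corootB_mem_integerLattice {α : EucB n} (hα : α ∈ DeltaB n) :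
    corootB n α ∈ integerLattice n := by
  obtain ⟨hα, h | h⟩ := mem_DeltaB_iff.1 hα
  · rw [corootB, real_inner_self_eq_norm_sq, h, div_one, two_smul]
    exact add_mem hα hα
  · rwa [corootB, real_inner_self_eq_norm_sq, h, div_self two_ne_zero, one_smul]

theorem sReflB_mem_DeltaB {α β : EucB n} (hα : α ∈ DeltaB n) (hβ : β ∈ DeltaB n) :
    sReflB n α β ∈ DeltaB n := by
  obtain ⟨hβ, hnorm⟩ := mem_DeltaB_iff.1 hβ
  obtain ⟨k, hk⟩ := exists_int_inner_eq (mem_DeltaB_iff.1 hα).1 hβ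
  refine mem_DeltaB_iff.2 ⟨?_, by rwa [norm_sReflB]⟩
  rw [← sub_sub_cancel β (sReflB n α β), sub_sReflB_apply, hk, Int.cast_smul_eq_zsmul]
  exact sub_mem hβ (Submodule.smul_mem _ k (corootB_mem_integerLattice hα))

/-- `i` and `j` are related when `eᵢ` agrees with one of `±eⱼ` modulo `V`. -/
def signSetoid (V : Submodule ℝ (EucB n)) : Setoid (Fin n) where
  r i j := ∃ s : ℤˣ, eB n i - s • eB n j ∈ V
  iseqv :=
    { refl i := ⟨1, by simp⟩
      symm := by
        rintro i j ⟨s, hs⟩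
        refine ⟨s, ?_⟩
        have h : eB n j - s • eB n i = -(s • (eB n i - s • eB n j)) := by
          rw [smul_sub, smul_smul, Int.units_mul_self, one_smul, neg_sub]
        rw [h]
        exact neg_mem ((V.smul_mem_iff' s).2 hs)
      trans := by
        rintro i j k ⟨s, hs⟩ ⟨t, ht⟩
        refine ⟨s * t, ?_⟩
        have h : eB n i - (s * t) • eB n k =
            (eB n i - s • eB n j) + s • (eB n j - t • eB n k) := by
          rw [smul_sub, smul_smul]
          abel
        rw [h]
        exact add_mem hs ((V.smul_mem_iff' s).2 ht) }

lemma eB_mem_iff_of_sub_units_smul_mem {V : Submodule ℝ (EucB n)} {i j : Fin n} {s : ℤˣ}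
    (h : eB n i - s • eB n j ∈ V) : eB n i ∈ V ↔ eB n j ∈ V := by
  rw [← V.smul_mem_iff' s (x := eB n j)]
  exact ⟨fun hi => by simpa using sub_mem hi h, fun hj => by simpa using add_mem h hj⟩

open Classical in
lemma exists_signed_representative (V : Submodule ℝ (EucB n)) :
    ∃ p : Fin n → EucB n,
      (∀ i, eB n i ∈ V → p i = 0) ∧
      (∀ i, eB n i ∉ V → ∃ (s : ℤˣ) (j : Fin n), p i = s • eB n j) ∧
      (∀ i, eB n i - p i ∈ V) ∧
      ∀ i j (s : ℤˣ), eB n i - s • eB n j ∈ V → p i = s • p j := by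
  let r (i : Fin n) : Fin n := (Quotient.mk (signSetoid V) i).out
  have hr (i : Fin n) : ∃ s : ℤˣ, eB n i - s • eB n (r i) ∈ V :=
    (signSetoid V).symm (Quotient.mk_out (s := signSetoid V) i)
  choose u hu using hr
  refine ⟨fun i => if eB n i ∈ V then 0 else u i • eB n (r i), fun i hi => if_pos hi,
    fun i hi => ⟨u i, r i, if_neg hi⟩, fun i => ?_, fun i j s hij => ?_⟩
  · dsimp only
    split_ifs with hi
    · rwa [sub_zero]
    · exact hu i
  · dsimp only
    rw [eB_mem_iff_of_sub_units_smul_mem hij]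
    split_ifs with hj
    · rw [smul_zero]
    · have hrij : r j = r i := congrArg Quotient.out
        (Quotient.sound (s := signSetoid V) (show (signSetoid V).r i j from ⟨s, hij⟩)).symm
      have hj' := hu j
      rw [hrij] at hj' ⊢
      have hmem : (s * u j) • eB n (r i) - u i • eB n (r i) ∈ V := by
        have h := sub_mem (sub_mem (hu i) hij) ((V.smul_mem_iff' s).2 hj')
        rw [smul_sub, smul_smul] at h
        convert h using 1
        abel
      rw [smul_smul, units_eq_of_smul_sub_smul_mem _ hmem]
      rwa [← eB_mem_iff_of_sub_units_smul_mem hj']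

lemma units_smul_mem_insert_zero {V : Submodule ℝ (EucB n)} {α : EucB n}
    (hα : α ∈ insert 0 (DeltaB n ∩ V)) (s : ℤˣ) : s • α ∈ insert 0 (DeltaB n ∩ V) := by
  rcases hα with rfl | ⟨hα, hαV⟩
  · exact .inl (smul_zero s)
  · exact .inr ⟨units_smul_mem_DeltaB hα s, (V.smul_mem_iff' s).2 hαV⟩

lemma eB_sub_units_smul_eB_mem_insert_zero {V : Submodule ℝ (EucB n)} {i j : Fin n} {s : ℤˣ}
    (hi : eB n i ∉ V) (h : eB n i - s • eB n j ∈ V) :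
    eB n i - s • eB n j ∈ insert 0 (DeltaB n ∩ V) := by
  rcases eq_or_ne i j with rfl | hij
  · have hs : 1 = s := units_eq_of_smul_sub_smul_mem hi (by rwa [one_smul])
    left
    rw [← hs, one_smul, sub_self]
  · refine .inr ⟨mem_DeltaB_iff_signed.2 (.inr ⟨1, -s, i, j, hij, ?_⟩), h⟩
    rw [one_smul, Units.neg_smul, sub_eq_add_neg]

theorem exists_linearMap_retraction (V : Submodule ℝ (EucB n)) :
    ∃ ρ : EucB n →ₗ[ℝ] EucB n, (∀ i, ρ (eB n i) ∈ insert 0 (DeltaB n ∩ V)) ∧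
      ∀ α ∈ DeltaB n ∩ V, ρ α = α := by
  obtain ⟨p, hp0, hpe, hpV, hp⟩ := exists_signed_representative V
  obtain ⟨ρ, hρ⟩ : ∃ ρ : EucB n →ₗ[ℝ] EucB n, ∀ i, ρ (eB n i) = eB n i - p i := by
    let b := (EuclideanSpace.basisFun (Fin n) ℝ).toBasis
    have hb (i : Fin n) : b i = eB n i := by simp [b, eB]
    exact ⟨b.constr ℝ fun i => eB n i - p i, fun i => by rw [← hb, b.constr_basis, hb]⟩
  have hρs (s : ℤˣ) (i : Fin n) : ρ (s • eB n i) = s • eB n i - s • p i := by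
    rw [Units.smul_def, map_zsmul, hρ, smul_sub, Units.smul_def]
  refine ⟨ρ, fun i => ?_, ?_⟩
  · rw [hρ]
    by_cases hi : eB n i ∈ V
    · rw [hp0 i hi, sub_zero]
      exact .inr ⟨.inr ⟨i, .inl rfl⟩, hi⟩
    · obtain ⟨s, j, hs⟩ := hpe i hi
      rw [hs]
      exact eB_sub_units_smul_eB_mem_insert_zero hi (hs ▸ hpV i)
  · rintro α ⟨hα, hαV⟩
    rcases mem_DeltaB_iff_signed.1 hα with ⟨s, i, rfl⟩ | ⟨s, t, i, j, -, rfl⟩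
    · rw [hρs, hp0 i ((V.smul_mem_iff' s).1 hαV), smul_zero, sub_zero]
    · have hij : eB n i - (-(s * t)) • eB n j ∈ V := by
        convert (V.smul_mem_iff' s).2 hαV using 1
        rw [smul_add, smul_smul, smul_smul, Int.units_mul_self, one_smul, Units.neg_smul,
          sub_neg_eq_add]
      rw [map_add, hρs, hρs, hp i j _ hij, smul_smul, mul_neg, ← mul_assoc, Int.units_mul_self,
        one_mul, Units.neg_smul]
      abel

/-- `ε` is a grading of the root subsystem `Δ ∩ V`; its values off `Δ ∩ V` are irrelevant. -/
structure IsGrading (V : Submodule ℝ (EucB n)) (ε : EucB n → ZMod 2) : Prop where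
  neg : ∀ α ∈ DeltaB n, α ∈ V → ε (-α) = ε α
  add : ∀ α β, α ∈ DeltaB n → α ∈ V → β ∈ DeltaB n → β ∈ V → α + β ∈ DeltaB n →
    ε (α + β) = ε α + ε β

/-- On `Δ ∩ V`, the function `ε` is the reduction modulo `2` of the inner product with `x`. -/
def IsRepresentedBy (V : Submodule ℝ (EucB n)) (ε : EucB n → ZMod 2) (x : EucB n) : Prop :=
  ∀ α ∈ DeltaB n, α ∈ V → ∃ k : ℤ, ⟪α, x⟫ = (k : ℝ) ∧ (k : ZMod 2) = ε α

section Representation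

variable {V : Submodule ℝ (EucB n)} {ε : EucB n → ZMod 2} {α β : EucB n}

lemma update_zero_apply_of_mem_DeltaB (ε : EucB n → ZMod 2) (hα : α ∈ DeltaB n) :
    Function.update ε 0 0 α = ε α :=
  Function.update_of_ne (ne_zero_of_mem_DeltaB hα) _ _

lemma IsGrading.update_zero_units_smul (hε : IsGrading V ε)
    (hα : α ∈ insert 0 (DeltaB n ∩ V)) (s : ℤˣ) :
    Function.update ε 0 0 (s • α) = Function.update ε 0 0 α := by
  rcases hα with rfl | ⟨hα, hαV⟩
  · rw [smul_zero]
  · rw [update_zero_apply_of_mem_DeltaB ε (units_smul_mem_DeltaB hα s),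
      update_zero_apply_of_mem_DeltaB ε hα]
    rcases Int.units_eq_one_or s with rfl | rfl
    · rw [one_smul]
    · rw [Units.neg_smul, one_smul, hε.neg α hα hαV]

lemma IsGrading.update_zero_add (hε : IsGrading V ε) (hα : α ∈ insert 0 (DeltaB n ∩ V))
    (hβ : β ∈ insert 0 (DeltaB n ∩ V)) (hαβ : α + β ∈ DeltaB n) :
    Function.update ε 0 0 (α + β) = Function.update ε 0 0 α + Function.update ε 0 0 β := by
  rcases hα with rfl | ⟨hα, hαV⟩
  · simp
  rcases hβ with rfl | ⟨hβ, hβV⟩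
  · simp
  rw [update_zero_apply_of_mem_DeltaB ε hα, update_zero_apply_of_mem_DeltaB ε hβ,
    update_zero_apply_of_mem_DeltaB ε hαβ, hε.add α β hα hαV hβ hβV hαβ]

theorem IsGrading.exists_isRepresentedBy (hε : IsGrading V ε) :
    ∃ x, IsRepresentedBy V ε x := by
  obtain ⟨ρ, hρ, hρ_eq⟩ := exists_linearMap_retraction V
  let ε₀ := Function.update ε 0 0
  let x : EucB n := WithLp.toLp 2 fun i => ((ε₀ (ρ (eB n i))).val : ℝ)
  have hρs (s : ℤˣ) (i : Fin n) : ρ (s • eB n i) = s • ρ (eB n i) := by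
    rw [Units.smul_def, map_zsmul, Units.smul_def]
  have hx (s : ℤˣ) (i : Fin n) :
      ∃ k : ℤ, ⟪s • eB n i, x⟫ = (k : ℝ) ∧ (k : ZMod 2) = ε₀ (ρ (s • eB n i)) := by
    refine ⟨s * (ε₀ (ρ (eB n i))).val, ?_, ?_⟩
    · rw [Units.smul_def, ← Int.cast_smul_eq_zsmul ℝ, real_inner_smul_left, inner_eB_left]
      simp [x]
    · have hε₀ : ε₀ (s • ρ (eB n i)) = ε₀ (ρ (eB n i)) := hε.update_zero_units_smul (hρ i) s
      rw [hρs, hε₀]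
      rcases Int.units_eq_one_or s with rfl | rfl <;> simp [CharTwo.neg_eq]
  refine ⟨x, fun α hα hαV => ?_⟩
  rw [← update_zero_apply_of_mem_DeltaB ε hα,
    ← congrArg (Function.update ε 0 0) (hρ_eq α ⟨hα, hαV⟩)]
  rcases mem_DeltaB_iff_signed.1 hα with ⟨s, i, rfl⟩ | ⟨s, t, i, j, -, rfl⟩
  · exact hx s i
  · obtain ⟨k, hk, hkε⟩ := hx s i
    obtain ⟨l, hl, hlε⟩ := hx t j
    have hsum : s • ρ (eB n i) + t • ρ (eB n j) ∈ DeltaB n := by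
      rwa [← hρs, ← hρs, ← map_add, hρ_eq _ ⟨hα, hαV⟩]
    refine ⟨k + l, ?_, ?_⟩
    · rw [inner_add_left, hk, hl, Int.cast_add]
    · rw [Int.cast_add, hkε, hlε, map_add, hρs, hρs]
      exact (hε.update_zero_add (units_smul_mem_insert_zero (hρ i) s)
        (units_smul_mem_insert_zero (hρ j) t) hsum).symm

end Representation

/-- The subspace of vectors fixed by `θ`. -/
def fixedSubspace (θ : EucB n ≃ₗ[ℝ] EucB n) : Submodule ℝ (EucB n) :=
  LinearMap.eqLocus (θ : EucB n →ₗ[ℝ] EucB n) LinearMap.id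

/-- The projection of the `θ`-fixed part of the coroot lattice onto `M_θ`. -/
def fixedToM (θ : EucB n ≃ₗ[ℝ] EucB n) : fixedQ n θ →ₗ[ℤ] MthB n θ :=
  ((ApB n θ).comap (AmB n θ).subtype).mkQ ∘ₗ
    (piQ n).restrict (q := AmB n θ) fun _ hv => Submodule.mem_map_of_mem hv

/-- The coroot of an imaginary root, as a `θ`-fixed element of the coroot lattice. -/
def fixedCoroot {θ : EucB n ≃ₗ[ℝ] EucB n} {α : EucB n} (hα : α ∈ DeltaB n) (hθα : θ α = α) :
    fixedQ n θ :=
  ⟨⟨corootB n α, Submodule.subset_span ⟨α, hα, rfl⟩⟩, by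
    change θ ((2 / ⟪α, α⟫) • α) = (2 / ⟪α, α⟫) • α
    rw [map_smul, hθα]⟩

section Telescoping

variable {θ : EucB n ≃ₗ[ℝ] EucB n}

lemma mB_eq_fixedToM {α : EucB n} (hα : α ∈ DeltaB n) (hθα : θ α = α) :
    mB n θ α = fixedToM θ (fixedCoroot hα hθα) :=
  dif_pos ⟨(fixedCoroot hα hθα).1.2, (fixedCoroot hα hθα).2⟩

lemma two_zsmul_fixedToM (v : fixedQ n θ) : (2 : ℤ) • fixedToM θ v = 0 := by
  have hπ : piQ n ((2 : ℤ) • (v : QvB n)) = 0 := (Submodule.Quotient.mk_eq_zero _).2 ⟨v, rfl⟩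
  rw [← map_zsmul]
  exact (congrArg (Submodule.mkQ _) (Subtype.ext hπ)).trans (map_zero _)

lemma val_nsmul_mB {α : EucB n} (hα : α ∈ DeltaB n) (hθα : θ α = α) (k : ℤ) :
    (k : ZMod 2).val • mB n θ α = fixedToM θ (k • fixedCoroot hα hθα) := by
  rw [mB_eq_fixedToM hα hθα, intCast_val_nsmul (two_zsmul_fixedToM _), map_zsmul]

lemma map_sReflB_eq_self {α β : EucB n} (hα : θ α = α) (hβ : θ β = β) :
    θ (sReflB n α β) = sReflB n α β := by
  rw [← sub_sub_cancel β (sReflB n α β), sub_sReflB_apply, corootB, map_sub, map_smul, map_smul,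
    hα, hβ]

lemma wordProdB_cons_apply (β : EucB n) (L : List (EucB n)) (x : EucB n) :
    wordProdB n (β :: L) x = wordProdB n L (sReflB n β x) := by
  simp [wordProdB]

theorem exists_SwordB_eq_fixedToM {ε : EucB n → ZMod 2} {L : List (EucB n)}
    (hL : ∀ β ∈ L, β ∈ DeltaB n ∧ θ β = β) (g : EucB n ≃ₗ[ℝ] EucB n) (x : EucB n)
    (hx : IsRepresentedBy (fixedSubspace θ) (ε ∘ g) x) :
    ∃ v : fixedQ n θ, ((v : QvB n) : EucB n) = x - wordProdB n L x ∧
      SwordB n θ ε g L = fixedToM θ v := by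
  induction L generalizing g x with
  | nil => exact ⟨0, by simp [wordProdB], (map_zero _).symm⟩
  | cons β L ih =>
    obtain ⟨⟨hβ, hθβ⟩, hL⟩ := List.forall_mem_cons.1 hL
    obtain ⟨k, hk, hkε⟩ := hx β hβ hθβ
    have hx' : IsRepresentedBy (fixedSubspace θ) (ε ∘ (g * sReflB n β)) (sReflB n β x) := by
      intro α hα hθα
      rw [inner_sReflB_right]
      exact hx _ (sReflB_mem_DeltaB hβ hα) (map_sReflB_eq_self hθβ hθα)
    obtain ⟨v, hv, hS⟩ := ih hL _ _ hx'
    refine ⟨k • fixedCoroot hβ hθβ + v, ?_, ?_⟩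
    · calc k • corootB n β + ((v : QvB n) : EucB n)
          = (x - sReflB n β x) + (sReflB n β x - wordProdB n L (sReflB n β x)) := by
            rw [hv, sub_sReflB_apply, hk, Int.cast_smul_eq_zsmul]
        _ = x - wordProdB n (β :: L) x := by
            rw [sub_add_sub_cancel, wordProdB_cons_apply]
    · rw [SwordB, hS, map_add, ← val_nsmul_mB, hkε, Function.comp_apply]

theorem mEps_reflection_general {ε : EucB n → ZMod 2} (hε : IsGrading (fixedSubspace θ) ε)
    {γ : EucB n} (hγ : γ ∈ DeltaB n) (hθγ : θ γ = γ) {L : List (EucB n)}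
    (hL : ∀ β ∈ L, β ∈ DeltaB n ∧ θ β = β) (hLw : wordProdB n L = sReflB n γ) :
    SwordB n θ ε 1 L = (ε γ).val • mB n θ γ := by
  obtain ⟨x, hx⟩ := hε.exists_isRepresentedBy
  obtain ⟨v, hv, hS⟩ := exists_SwordB_eq_fixedToM hL 1 x hx
  obtain ⟨k, hk, hkε⟩ := hx γ hγ hθγ
  have hvγ : v = k • fixedCoroot hγ hθγ := by
    ext1
    ext1
    rw [hv, hLw, sub_sReflB_apply, hk, Int.cast_smul_eq_zsmul]
    rfl
  rw [hS, hvγ, ← val_nsmul_mB, hkε]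

end Telescoping

lemma DeltaBpos_subset_DeltaB : DeltaBpos n ⊆ DeltaB n := by
  rintro α (⟨i, j, hij, h | h⟩ | ⟨i, h⟩)
  · exact .inl ⟨i, j, hij, .inl h⟩
  · exact .inl ⟨i, j, hij, .inr (.inl h)⟩
  · exact .inr ⟨i, .inl h⟩

end TypeB

/-- For any imaginary root `γ ∈ Δ_i` (not necessarily simple), `m_ε(s_γ) = ε(γ)·m_γ` in
`M_θ`: for any minimal-length word `L` in the simple imaginary roots `Π_i` whose product
of reflections is `s_γ`, the value `S(L)` equals `ε(γ)·m_γ`. -/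
theorem mEps_reflection (n : ℕ) (hn : 0 < n)
    (θ : EucB n ≃ₗ[ℝ] EucB n) (hθW : θ ∈ WeylB n) (hθ2 : θ * θ = 1)
    (ε : EucB n → ZMod 2)
    (hε1 : ∀ α, α ∈ DeltaB n → θ α = α → ε (-α) = ε α)
    (hε2 : ∀ α β : EucB n, α ∈ DeltaB n → θ α = α → β ∈ DeltaB n → θ β = β →
      α + β ∈ DeltaB n → ε (α + β) = ε α + ε β)
    (γ : EucB n) (hγ : γ ∈ DeltaB n) (hγim : θ γ = γ)
    (L : List (EucB n)) (hL : ∀ β ∈ L, β ∈ SimpleImB n θ)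
    (hLw : wordProdB n L = sReflB n γ)
    (hLmin : ∀ K : List (EucB n), (∀ β ∈ K, β ∈ SimpleImB n θ) →
      wordProdB n K = sReflB n γ → L.length ≤ K.length) :
    SwordB n θ ε 1 L = (ε γ).val • mB n θ γ :=
  mEps_reflection_general ⟨hε1, hε2⟩ hγ hγim
    (fun β hβ => ⟨DeltaBpos_subset_DeltaB (hL β hβ).1.1, (hL β hβ).1.2⟩) hLw
end
end
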